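/- Let 1 ≤ p < q ≤ m with 1 < q − p < m − 1, and let φ be a (p, q)-PFBR on [D_≺(p, q)]^n with probabilistic ballots (β_S)_{S⊆N} which is anonymous (β_S = β_{S′} for all nonempty S, S′ ⊆ N with |S| = |S′|, so every conditional dictatorial coefficient equals 1/n) and satisfies per-capita monotonicity w.r.t. a_p and a_q. Define α = min over nonempty S ⊂ N of min( β_S(b̂_S^R)/|S| , β_S(b̂_S^L)/(n − |S|) ). Then α = 1/n if and only if |supp(β_S)| = 2 for every nonempty S ⊂ N; moreover, if α = 1/n, then β_S = (|S|/n) e_{b̂_S^R} + ((n − |S|)/n) e_{b̂_S^L} for every nonempty S ⊂ N, and φ is decomposable. -/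

import Mathlib

open Finset

noncomputable section

/-- A preference is a linear order over the `m` alternatives, represented as a bijection
from rank positions (0-based: position `0` is the top) to alternatives. -/
abbrev Pref (m : ℕ) := Fin m ≃ Fin m

namespace PFBRPaper

variable {m n : ℕ}

/-- `a` is strictly preferred to `b` under `P`. -/
def Prefers (P : Pref m) (a b : Fin m) : Prop := P.symm a < P.symm b

/-- The last alternative `a_m` (0-based index `m-1`). -/
def lastAlt (m : ℕ) [NeZero m] : Fin m :=
  ⟨m - 1, Nat.sub_lt (Nat.pos_of_ne_zero (NeZero.ne m)) Nat.one_pos⟩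

/-- Every alternative is top-ranked by some preference in the domain. -/
def MinimallyRich [NeZero m] (D : Set (Pref m)) : Prop :=
  ∀ a : Fin m, ∃ P ∈ D, P 0 = a

/-- The preference ranking `a_m` first, ..., `a_1` last. -/
def revPref (m : ℕ) : Pref m :=
  ⟨Fin.rev, Fin.rev, fun i => Fin.rev_rev i, fun i => Fin.rev_rev i⟩

/-- Diversity, with the labeling convention: the domain contains the preference ranking
`a_1` first, `a_2` second, ..., `a_m` last (the identity), together with its
complete reversal. -/
def Diversity (D : Set (Pref m)) : Prop :=
  Equiv.refl (Fin m) ∈ D ∧ revPref m ∈ D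

/-- Two preferences are adjacent: the alternatives at two contiguous rank positions are
swapped and everything else is unchanged. -/
def Adjacent (P P' : Pref m) : Prop :=
  P ≠ P' ∧ ∃ k : ℕ, ∃ hk : k + 1 < m,
    P ⟨k, Nat.lt_of_succ_lt hk⟩ = P' ⟨k + 1, hk⟩ ∧
    P ⟨k + 1, hk⟩ = P' ⟨k, Nat.lt_of_succ_lt hk⟩ ∧
    ∀ l : Fin m, (l : ℕ) ≠ k → (l : ℕ) ≠ k + 1 → P l = P' l

/-- `π 0, …, π (v-1)` is a path in `D` connecting `P` and `P'`. -/
def IsPath (D : Set (Pref m)) (P P' : Pref m) (π : ℕ → Pref m) (v : ℕ) : Prop :=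
  1 ≤ v ∧ (∀ i < v, π i ∈ D) ∧
  (∀ i < v, ∀ j < v, π i = π j → i = j) ∧
  π 0 = P ∧ π (v - 1) = P' ∧
  ∀ i, i + 1 < v → Adjacent (π i) (π (i + 1))

/-- The path `π 0, …, π (v-1)` has no `{a,b}`-restoration: the relative ranking of
`a` and `b` switches at most once along the path. -/
def NoRestoration (π : ℕ → Pref m) (v : ℕ) (a b : Fin m) : Prop :=
  ∀ i j k : ℕ, i < j → j < k → k < v →
    ¬(Prefers (π i) a b ∧ Prefers (π j) b a ∧ Prefers (π k) a b) ∧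
    ¬(Prefers (π i) b a ∧ Prefers (π j) a b ∧ Prefers (π k) b a)

def NoRestorationDomain (D : Set (Pref m)) : Prop :=
  ∀ P ∈ D, ∀ P' ∈ D, P ≠ P' → ∀ a b : Fin m,
    ∃ π v, IsPath D P P' π v ∧ NoRestoration π v a b

def RegularDomain [NeZero m] (D : Set (Pref m)) : Prop :=
  MinimallyRich D ∧ Diversity D ∧ NoRestorationDomain D

/-- `a ≈ b`: the two alternatives are strongly connected in the domain `D`. -/
def StronglyConnected [NeZero m] (D : Set (Pref m)) (a b : Fin m) : Prop :=
  a ≠ b ∧ ∃ P ∈ D, ∃ P' ∈ D,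
    P 0 = a ∧ P 1 = b ∧ P' 0 = b ∧ P' 1 = a ∧
    ∀ k : Fin m, 2 ≤ (k : ℕ) → P k = P' k

/-- `l` is a vertex-path of the graph `G_≈^B(D)`. -/
def IsVertexPathOn [NeZero m] (D : Set (Pref m)) (B : Set (Fin m)) (l : List (Fin m)) : Prop :=
  l ≠ [] ∧ l.Nodup ∧ (∀ x ∈ l, x ∈ B) ∧ l.Chain' (StronglyConnected D)

/-- `l` is a vertex-path of `G_≈^B(D)` connecting `a` and `b`. -/
def VertexPathBetween [NeZero m] (D : Set (Pref m)) (B : Set (Fin m)) (a b : Fin m)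
    (l : List (Fin m)) : Prop :=
  IsVertexPathOn D B l ∧ l.head? = some a ∧ l.getLast? = some b

/-- `a` is a leaf of the subgraph `G_≈^B(D)`. -/
def IsLeaf [NeZero m] (D : Set (Pref m)) (B : Set (Fin m)) (a : Fin m) : Prop :=
  a ∈ B ∧ ∃! b : Fin m, b ∈ B ∧ StronglyConnected D a b

/-- Single-peakedness w.r.t. the natural order. -/
def SinglePeaked [NeZero m] (P : Pref m) : Prop :=
  ∀ a b : Fin m, ((a < b ∧ b < P 0) ∨ (P 0 < b ∧ b < a)) → Prefers P b a

/-- A `(p,q)`-hybrid preference (thresholds `p < q`, 0-based). -/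
def IsHybridPref [NeZero m] (p q : Fin m) (P : Pref m) : Prop :=
  (∀ r s : Fin m, ((r ≤ p ∧ s ≤ p) ∨ (q ≤ r ∧ q ≤ s)) →
      ((r < s ∧ s < P 0) ∨ (P 0 < s ∧ s < r)) → Prefers P s r) ∧
  (P 0 ≤ p → ∀ l : Fin m, p ≤ l → l ≤ q → l ≠ p → Prefers P p l) ∧
  (q ≤ P 0 → ∀ l : Fin m, p ≤ l → l ≤ q → l ≠ q → Prefers P q l)

/-- The `(p,q)`-hybrid domain of all `(p,q)`-hybrid preferences. -/
def hybridDomain [NeZero m] (p q : Fin m) : Set (Pref m) := {P | IsHybridPref p q P}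

/-- `D` is a `(p,q)`-hybrid* domain. -/
def IsHybridStar [NeZero m] (D : Set (Pref m)) (p q : Fin m) : Prop :=
  D ⊆ hybridDomain p q ∧
  (∀ k : Fin m, k ≠ 0 → k ≠ lastAlt m →
      ∃ l, VertexPathBetween D Set.univ 0 (lastAlt m) l ∧ k ∈ l) ∧
  ((p : ℕ) + 1 < (q : ℕ) → ∀ a : Fin m, ¬ IsLeaf D (Set.Icc p q) a)

/-- A lottery over the alternatives. -/
def Lottery (m : ℕ) : Type :=
  {f : Fin m → ℝ // (∀ a, 0 ≤ f a) ∧ ∑ a, f a = 1}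

/-- The probability that a lottery assigns to a set of alternatives. -/
def Lottery.prob (lam : Lottery m) (B : Finset (Fin m)) : ℝ := ∑ a ∈ B, lam.1 a

/-- The support of a lottery. -/
def Lottery.supp (lam : Lottery m) : Finset (Fin m) :=
  Finset.univ.filter (fun a => 0 < lam.1 a)

/-- The degenerate lottery on `a`. -/
def degLottery (a : Fin m) : Lottery m :=
  ⟨fun b => if b = a then 1 else 0,
   fun b => by by_cases h : b = a <;> simp [h],
   by simp⟩

/-- A profile of preferences drawn from the domain `D`. -/
abbrev Profile (D : Set (Pref m)) (n : ℕ) := Fin n → D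

/-- The top-ranked alternative of a preference in the domain. -/
def topOf [NeZero m] {D : Set (Pref m)} (P : D) : Fin m := P.1 0

def Unanimous [NeZero m] {D : Set (Pref m)} (φ : Profile D n → Lottery m) : Prop :=
  ∀ (P : Profile D n) (a : Fin m), (∀ i, topOf (P i) = a) → φ P = degLottery a

/-- The total probability of the `k` top-ranked alternatives of `P` under `lam`. -/
def topSum (lam : Lottery m) (P : Pref m) (k : ℕ) : ℝ :=
  ∑ t ∈ Finset.univ.filter (fun t : Fin m => (t : ℕ) < k), lam.1 (P t)

/-- Strategy-proofness: truth-telling first-order stochastically dominates any unilateral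
misrepresentation. -/
def StrategyProof {D : Set (Pref m)} (φ : Profile D n → Lottery m) : Prop :=
  ∀ (i : Fin n) (P : Profile D n) (Pi' : D) (k : ℕ), k ≤ m →
    topSum (φ (Function.update P i Pi')) (P i).1 k ≤ topSum (φ P) (P i).1 k

def TopsOnly [NeZero m] {D : Set (Pref m)} (φ : Profile D n → Lottery m) : Prop :=
  ∀ P P' : Profile D n, (∀ i, topOf (P i) = topOf (P' i)) → φ P = φ P'

def Anonymous {D : Set (Pref m)} (φ : Profile D n → Lottery m) : Prop :=
  ∀ (P : Profile D n) (σ : Equiv.Perm (Fin n)), φ (P ∘ σ) = φ P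

/-- The interval `[a_k, a_m]`. -/
def upSet (k : Fin m) : Finset (Fin m) := Finset.univ.filter (fun a => k ≤ a)

/-- The interval `[a_1, a_k]`. -/
def downSet (k : Fin m) : Finset (Fin m) := Finset.univ.filter (fun a => a ≤ k)

/-- The interval `[a_p, a_q]`. -/
def midSet (p q : Fin m) : Finset (Fin m) := Finset.univ.filter (fun a => p ≤ a ∧ a ≤ q)

/-- `S(k,P)`: the voters whose preference top is not to the left of `a_k`. -/
def voterSet [NeZero m] {D : Set (Pref m)} (P : Profile D n) (k : Fin m) : Finset (Fin n) :=
  Finset.univ.filter (fun i => k ≤ topOf (P i))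

/-- `β_{S(k,P)}([a_k, a_m])`, with the convention that it is `0` for `k = m`. -/
def tailProb [NeZero m] {D : Set (Pref m)} (β : Finset (Fin n) → Lottery m)
    (P : Profile D n) (k : ℕ) : ℝ :=
  if h : k < m then (β (voterSet P ⟨k, h⟩)).prob (upSet ⟨k, h⟩) else 0

def BallotUnanimity [NeZero m] (β : Finset (Fin n) → Lottery m) : Prop :=
  β Finset.univ = degLottery (lastAlt m) ∧ β ∅ = degLottery 0

def BallotMonotone (β : Finset (Fin n) → Lottery m) : Prop :=
  ∀ S T : Finset (Fin n), S ⊂ T →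
    ∀ k : Fin m, (β S).prob (upSet k) ≤ (β T).prob (upSet k)

/-- `φ` is a probabilistic fixed ballot rule with probabilistic ballots `β`. -/
def IsPFBRWith [NeZero m] {D : Set (Pref m)} (φ : Profile D n → Lottery m)
    (β : Finset (Fin n) → Lottery m) : Prop :=
  BallotUnanimity β ∧ BallotMonotone β ∧
  ∀ (P : Profile D n) (k : Fin m),
    (φ P).1 k = tailProb β P (k : ℕ) - tailProb β P ((k : ℕ) + 1)

def IsPFBR [NeZero m] {D : Set (Pref m)} (φ : Profile D n → Lottery m) : Prop :=
  ∃ β, IsPFBRWith φ β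

/-- The constrained random-dictatorship condition w.r.t. `a_p` and `a_q`. -/
def ConstrainedRD (p q : Fin m) (β : Finset (Fin n) → Lottery m) : Prop :=
  ∃ ε : Fin n → ℝ, (∀ i, 0 ≤ ε i) ∧ ∑ i, ε i = 1 ∧
    ∀ S : Finset (Fin n),
      (β S).prob (upSet q) = ∑ i ∈ S, ε i ∧
      (β S).prob (downSet p) = ∑ i ∈ Sᶜ, ε i

/-- The constrained random-dictatorship condition w.r.t. `a_p` and `a_q` with every
conditional dictatorial coefficient equal to `1/n`. -/
def ConstrainedRDUniform (p q : Fin m) (β : Finset (Fin n) → Lottery m) : Prop :=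
  ∀ S : Finset (Fin n),
    (β S).prob (upSet q) = (S.card : ℝ) / (n : ℝ) ∧
    (β S).prob (downSet p) = ((Sᶜ : Finset (Fin n)).card : ℝ) / (n : ℝ)

/-- Anonymity at the level of probabilistic ballots. -/
def BallotAnonymous (β : Finset (Fin n) → Lottery m) : Prop :=
  ∀ S S' : Finset (Fin n), S.Nonempty → S'.Nonempty → S.card = S'.card → β S = β S'

/-- Per-capita monotonicity w.r.t. `a_p` and `a_q`. -/
def PerCapitaMonotone (p q : Fin m) (β : Finset (Fin n) → Lottery m) : Prop :=
  ∀ S S' : Finset (Fin n), S.Nonempty → S ⊂ S' → S' ⊂ Finset.univ →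
    (∀ t : Fin m, q ≤ t →
      (β S).prob (upSet t) / (S.card : ℝ) ≤ (β S').prob (upSet t) / (S'.card : ℝ)) ∧
    (∀ s : Fin m, s ≤ p →
      (β Sᶜ).prob (downSet s) / (S.card : ℝ) ≤ (β S'ᶜ).prob (downSet s) / (S'.card : ℝ))

/-- Decomposability: `φ` is a mixture of finitely many unanimous and strategy-proof
deterministic social choice functions. -/
def Decomposable [NeZero m] {D : Set (Pref m)} (φ : Profile D n → Lottery m) : Prop :=
  ∃ (r : ℕ) (f : Fin r → (Profile D n → Fin m)) (α : Fin r → ℝ),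
    (∀ k, 0 < α k) ∧ ∑ k, α k = 1 ∧
    (∀ k, Unanimous (fun P => degLottery (f k P)) ∧
          StrategyProof (fun P => degLottery (f k P))) ∧
    ∀ (P : Profile D n) (a : Fin m),
      (φ P).1 a = ∑ k, α k * (if f k P = a then 1 else 0)

/-- `b̂_S^R`: the `≺`-minimum of `supp(β_S) ∩ R` (with the convention `b̂_N^R = a_m`). -/
def bR [NeZero m] (β : Finset (Fin n) → Lottery m) (q : Fin m) (S : Finset (Fin n)) : Fin m :=
  if h : ((β S).supp ∩ upSet q).Nonempty then ((β S).supp ∩ upSet q).min' h else lastAlt m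

/-- `b̂_S^L`: the `≺`-maximum of `supp(β_S) ∩ L` (with the convention `b̂_∅^L = a_1`). -/
def bL [NeZero m] (β : Finset (Fin n) → Lottery m) (p : Fin m) (S : Finset (Fin n)) : Fin m :=
  if h : ((β S).supp ∩ downSet p).Nonempty then ((β S).supp ∩ downSet p).max' h else 0

/-- `α = min over nonempty S ⊂ N of min(β_S(b̂_S^R)/|S|, β_S(b̂_S^L)/(n-|S|))`. -/
def alphaVal [NeZero m] (β : Finset (Fin n) → Lottery m) (p q : Fin m) : ℝ :=
  sInf {x : ℝ | ∃ S : Finset (Fin n), S.Nonempty ∧ S ≠ Finset.univ ∧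
    x = min ((β S).1 (bR β q S) / (S.card : ℝ))
            ((β S).1 (bL β p S) / ((n : ℝ) - (S.card : ℝ)))}

/-- `γ_S = (|S|/n) e_{b̂_S^R} + ((n-|S|)/n) e_{b̂_S^L}`, pointwise. -/
def gammaFun [NeZero m] (β : Finset (Fin n) → Lottery m) (p q : Fin m)
    (S : Finset (Fin n)) (a : Fin m) : ℝ :=
  ((S.card : ℝ) / (n : ℝ)) * (if a = bR β q S then 1 else 0)
  + (((n : ℝ) - (S.card : ℝ)) / (n : ℝ)) * (if a = bL β p S then 1 else 0)

/-- The max-min formula `f(P) = max_{S ⊆ N} min({r_1(P_j) : j ∈ S} ∪ {b_S})`. -/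
def fbrOutcome [NeZero m] {D : Set (Pref m)} (b : Finset (Fin n) → Fin m)
    (P : Profile D n) : Fin m :=
  Finset.univ.sup' Finset.univ_nonempty
    (fun S : Finset (Fin n) =>
      (insert (b S) (S.image (fun j => topOf (P j)))).inf' (Finset.insert_nonempty _ _) id)

/-- `f` is a `(p,q)`-fixed ballot rule with deterministic ballots `b` and constrained
dictator `i`. -/
def IsFBRWith [NeZero m] {D : Set (Pref m)} (p q : Fin m) (f : Profile D n → Fin m)
    (b : Finset (Fin n) → Fin m) (i : Fin n) : Prop :=
  b Finset.univ = lastAlt m ∧ b ∅ = 0 ∧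
  (∀ S T : Finset (Fin n), S ⊂ T → b S ≤ b T) ∧
  (∀ S : Finset (Fin n), (i ∈ S → q ≤ b S) ∧ (i ∉ S → b S ≤ p)) ∧
  ∀ P : Profile D n, f P = fbrOutcome b P

end PFBRPaper

open PFBRPaper

/-!
Every coalition's share is at most `1/n`, because the constrained random-dictatorship condition
bounds `β_S(b̂_S^R)` by `|S|/n` and `β_S(b̂_S^L)` by `(n-|S|)/n`.  Hence `α = 1/n` forces both
bounds to be attained for every `S`; as they add up to one, this says that `β_S` has no mass
elsewhere.

In that case `β_S` is the uniform mixture over the voters `i` of the deterministic ballots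
equal to `b̂_S^R` if `i ∈ S` and to `b̂_S^L` otherwise.  Monotonicity of the `β_S` makes the
ballots of each voter `i` monotone, so they define a fixed ballot rule with constrained dictator
`i`.  A fixed ballot rule is characterised by `a_k ⪯ f(P) ↔ a_k ⪯ b_{S(k,P)}`, which makes the
passage from ballots to rules compatible with mixtures.
-/

namespace PFBRPaper

theorem csInf_eq_iff_forall_eq {α : Type*} [ConditionallyCompleteLattice α] {s : Set α} {c : α}
    (hne : s.Nonempty) (hbdd : BddBelow s) (hle : ∀ x ∈ s, x ≤ c) :
    sInf s = c ↔ ∀ x ∈ s, x = c := by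
  refine ⟨fun h x hx => (hle x hx).antisymm (h ▸ csInf_le hbdd hx), fun h => ?_⟩
  rw [Set.eq_singleton_iff_nonempty_unique_mem.2 ⟨hne, h⟩, csInf_singleton]

/-! ### Lotteries -/

section Lottery

variable {m : ℕ} {lam : Lottery m} {a b : Fin m} {B : Finset (Fin m)} {u v : ℝ}

theorem Lottery.mem_supp : a ∈ lam.supp ↔ 0 < lam.1 a := by
  simp [Lottery.supp]

theorem Lottery.apply_le_prob (ha : a ∈ B) : lam.1 a ≤ lam.prob B :=
  single_le_sum (f := lam.1) (fun c _ => lam.2.1 c) ha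

theorem Lottery.supp_inter_nonempty (hB : 0 < lam.prob B) : (lam.supp ∩ B).Nonempty := by
  obtain ⟨a, ha, hpos⟩ := exists_lt_of_sum_lt (s := B) (f := fun _ => (0 : ℝ)) (g := lam.1)
    (by rw [sum_const_zero]; exact hB)
  exact ⟨a, mem_inter.2 ⟨Lottery.mem_supp.2 hpos, ha⟩⟩

theorem Lottery.supp_subset_iff : lam.supp ⊆ B ↔ lam.prob B = 1 := by
  have hsum : lam.prob B + lam.prob Bᶜ = 1 := (sum_add_sum_compl B lam.1).trans lam.2.2
  calc lam.supp ⊆ B ↔ ∀ c ∈ Bᶜ, lam.1 c = 0 := by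
        simp only [subset_iff, Lottery.mem_supp, mem_compl, (lam.2.1 _).lt_iff_ne']
        exact forall_congr' fun c => not_imp_comm
    _ ↔ lam.prob Bᶜ = 0 := (sum_eq_zero_iff_of_nonneg fun c _ => lam.2.1 c).symm
    _ ↔ lam.prob B = 1 := by constructor <;> intro h <;> linarith

theorem Lottery.supp_subset_pair_iff (hab : a ≠ b) (huv : u + v = 1) (ha : lam.1 a ≤ u)
    (hb : lam.1 b ≤ v) : lam.supp ⊆ {a, b} ↔ lam.1 a = u ∧ lam.1 b = v := by
  rw [Lottery.supp_subset_iff, Lottery.prob, sum_pair hab]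
  constructor
  · intro h
    constructor <;> linarith
  · rintro ⟨rfl, rfl⟩
    exact huv

theorem Lottery.apply_eq_pair_iff (hab : a ≠ b) (huv : u + v = 1) :
    (∀ c, lam.1 c = u * (if c = a then 1 else 0) + v * (if c = b then 1 else 0)) ↔
      lam.1 a = u ∧ lam.1 b = v := by
  refine ⟨fun h => by simp [h, hab, hab.symm], fun h c => ?_⟩
  by_cases hca : c = a
  · simp [hca, hab, h.1]
  by_cases hcb : c = b
  · simp [hcb, hab.symm, h.2]
  have hsupp := (Lottery.supp_subset_pair_iff hab huv h.1.le h.2.le).2 h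
  have hc : c ∉ lam.supp := fun hc => by simpa [hca, hcb] using hsupp hc
  rw [Lottery.mem_supp, not_lt] at hc
  simpa [hca, hcb] using hc.antisymm (lam.2.1 c)

theorem supp_degLottery (a : Fin m) : (degLottery a).supp = {a} := by
  ext c
  rw [Lottery.mem_supp, mem_singleton]
  by_cases h : c = a <;> simp [degLottery, h]

theorem topSum_degLottery (a : Fin m) (P : Pref m) (k : ℕ) :
    topSum (degLottery a) P k = if (P.symm a : ℕ) < k then 1 else 0 := by
  simp only [topSum, degLottery, ← Equiv.eq_symm_apply, sum_ite_eq', mem_filter, mem_univ, true_and]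

theorem strategyProof_degLottery_of_symm_le {n : ℕ} {D : Set (Pref m)}
    {f : Profile D n → Fin m}
    (hf : ∀ (j : Fin n) (P : Profile D n) (Q : D),
      (P j).1.symm (f P) ≤ (P j).1.symm (f (Function.update P j Q))) :
    StrategyProof fun P => degLottery (f P) := by
  intro j P Q k _
  simp only [topSum_degLottery]
  have hrank : ((P j).1.symm (f P) : ℕ) ≤ (P j).1.symm (f (Function.update P j Q)) := hf j P Q
  split_ifs <;> first | omega | norm_num

end Lottery

/-! ### Strategy-proofness of fixed ballot rules -/

section HybridPref

variable {m : ℕ} [NeZero m] {p q y z : Fin m} {P : Pref m}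

theorem IsHybridPref.prefers_left (hP : IsHybridPref p q P) (hpq : p < q) (htop : P 0 ≤ p)
    (hz : p < z) : Prefers P p z := by
  have hmid := hP.2.1 htop
  rcases le_or_gt z q with hzq | hqz
  · exact hmid z hz.le hzq hz.ne'
  · have hqz' : Prefers P q z :=
      hP.1 z q (.inr ⟨hqz.le, le_rfl⟩) (.inr ⟨htop.trans_lt hpq, hqz⟩)
    exact (hmid q hpq.le le_rfl hpq.ne').trans hqz'

theorem IsHybridPref.prefers_right (hP : IsHybridPref p q P) (hpq : p < q) (htop : q ≤ P 0)
    (hz : z < q) : Prefers P q z := by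
  have hmid := hP.2.2 htop
  rcases le_or_gt p z with hpz | hzp
  · exact hmid z hpz hz.le hz.ne
  · have hpz' : Prefers P p z :=
      hP.1 z p (.inl ⟨hzp.le, le_rfl⟩) (.inl ⟨hzp, hpq.trans_le htop⟩)
    exact (hmid p le_rfl hpq.le hpq.ne).trans hpz'

theorem IsHybridPref.prefers_of_top_lt (hP : IsHybridPref p q P) (hpq : p < q) (hy : P 0 < y)
    (hyz : y < z) (hmid : y ∉ Set.Ioo p q) : Prefers P y z := by
  rcases le_or_gt y p with hyp | hpy
  · rcases le_or_gt z p with hzp | hpz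
    · exact hP.1 z y (.inl ⟨hzp, hyp⟩) (.inr ⟨hy, hyz⟩)
    · have hpz' : Prefers P p z := hP.prefers_left hpq (hy.le.trans hyp) hpz
      rcases hyp.eq_or_lt with rfl | hyp'
      · exact hpz'
      · exact (hP.1 p y (.inl ⟨le_rfl, hyp⟩) (.inr ⟨hy, hyp'⟩)).trans hpz'
  · have hqy : q ≤ y := not_lt.1 fun h => hmid ⟨hpy, h⟩
    exact hP.1 z y (.inr ⟨hqy.trans hyz.le, hqy⟩) (.inr ⟨hy, hyz⟩)

theorem IsHybridPref.prefers_of_lt_top (hP : IsHybridPref p q P) (hpq : p < q) (hy : y < P 0)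
    (hzy : z < y) (hmid : y ∉ Set.Ioo p q) : Prefers P y z := by
  rcases le_or_gt q y with hqy | hyq
  · rcases le_or_gt q z with hqz | hzq
    · exact hP.1 z y (.inr ⟨hqz, hqy⟩) (.inl ⟨hzy, hy⟩)
    · have hqz' : Prefers P q z := hP.prefers_right hpq (hqy.trans hy.le) hzq
      rcases hqy.eq_or_lt with rfl | hqy'
      · exact hqz'
      · exact (hP.1 q y (.inr ⟨le_rfl, hqy⟩) (.inl ⟨hqy', hy⟩)).trans hqz'
  · have hyp : y ≤ p := not_lt.1 fun h => hmid ⟨h, hyq⟩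
    exact hP.1 z y (.inl ⟨hzy.le.trans hyp, hyp⟩) (.inl ⟨hzy, hy⟩)

end HybridPref

section FixedBallotRule

variable {m n : ℕ} [NeZero m] {D : Set (Pref m)} {p q k : Fin m} {b : Finset (Fin n) → Fin m}

theorem le_lastAlt (a : Fin m) : a ≤ lastAlt m := Nat.le_sub_one_of_lt a.2

theorem mem_voterSet {P : Profile D n} {i : Fin n} : i ∈ voterSet P k ↔ k ≤ topOf (P i) := by
  simp [voterSet]

theorem voterSet_update_subset {P : Profile D n} {j : Fin n} {Q : D} (hk : k ≤ topOf (P j)) :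
    voterSet (Function.update P j Q) k ⊆ voterSet P k := by
  intro i
  rcases eq_or_ne i j with rfl | hij
  · exact fun _ => mem_voterSet.2 hk
  · simp only [mem_voterSet, Function.update_of_ne hij, imp_self]

theorem subset_voterSet_update {P : Profile D n} {j : Fin n} {Q : D} (hk : topOf (P j) < k) :
    voterSet P k ⊆ voterSet (Function.update P j Q) k := by
  intro i
  rcases eq_or_ne i j with rfl | hij
  · exact fun hi => absurd (mem_voterSet.1 hi) hk.not_ge
  · simp only [mem_voterSet, Function.update_of_ne hij, imp_self]

theorem le_fbrOutcome_iff (hb : Monotone b) (P : Profile D n) :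
    k ≤ fbrOutcome b P ↔ k ≤ b (voterSet P k) := by
  have hmaxmin : k ≤ fbrOutcome b P ↔ ∃ S, k ≤ b S ∧ S ⊆ voterSet P k := by
    simp [fbrOutcome, le_sup'_iff, le_inf'_iff, subset_iff, mem_voterSet]
  rw [hmaxmin]
  exact ⟨fun ⟨_, hS, hsub⟩ => hS.trans (hb hsub), fun h => ⟨_, h, Subset.rfl⟩⟩

namespace IsFBRWith

variable {f : Profile D n → Fin m} {i j : Fin n} {P : Profile D n}

theorem monotone (hf : IsFBRWith p q f b i) : Monotone b :=
  monotone_iff_forall_lt.2 hf.2.2.1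

theorem le_iff (hf : IsFBRWith p q f b i) : k ≤ f P ↔ k ≤ b (voterSet P k) := by
  rw [hf.2.2.2.2 P, le_fbrOutcome_iff hf.monotone]

theorem unanimous (hf : IsFBRWith p q f b i) : Unanimous fun P => degLottery (f P) := by
  intro P a ha
  refine congrArg degLottery ?_
  refine eq_of_forall_le_iff fun k => ?_
  rw [hf.le_iff]
  by_cases hk : k ≤ a
  · have hall : voterSet P k = univ := by ext; simp [mem_voterSet, ha, hk]
    simp only [hall, hf.1, le_lastAlt, hk]
  · have hnone : voterSet P k = ∅ := by ext; simp [mem_voterSet, ha, hk]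
    simp only [hnone, hf.2.1, hk, iff_false, not_le]
    exact (Fin.zero_le a).trans_lt (not_le.1 hk)

theorem le_of_le_top (hf : IsFBRWith p q f b i) (hkq : k ≤ q) (hk : k ≤ topOf (P i)) :
    k ≤ f P :=
  hf.le_iff.2 (hkq.trans ((hf.2.2.2.1 _).1 (mem_voterSet.2 hk)))

theorem le_top_of_le (hf : IsFBRWith p q f b i) (hpk : p < k) (hk : k ≤ f P) :
    k ≤ topOf (P i) := by
  by_contra hlt
  have hi : i ∉ voterSet P k := fun hi => hlt (mem_voterSet.1 hi)
  exact hpk.not_ge ((hf.le_iff.1 hk).trans ((hf.2.2.2.1 _).2 hi))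

theorem top_eq_of_mem_Ioo (hf : IsFBRWith p q f b i) (hmid : f P ∈ Set.Ioo p q) :
    topOf (P i) = f P := by
  refine le_antisymm ?_ (hf.le_top_of_le hmid.1 le_rfl)
  have hmin : min (topOf (P i)) q ≤ f P := hf.le_of_le_top (min_le_right _ _) (min_le_left _ _)
  exact (min_le_iff.1 hmin).resolve_right hmid.2.not_ge

theorem eq_top_of_mem_Ioo (hf : IsFBRWith p q f b i) (hmid : topOf (P i) ∈ Set.Ioo p q) :
    f P = topOf (P i) := by
  have hle : topOf (P i) ≤ f P := hf.le_of_le_top hmid.2.le le_rfl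
  exact (hf.le_top_of_le (hmid.1.trans_le hle) le_rfl).antisymm hle

theorem update_eq_of_mem_Ioo (hf : IsFBRWith p q f b i) (hmid : f P ∈ Set.Ioo p q)
    (hj : topOf (P j) ≠ f P) (Q : D) : f (Function.update P j Q) = f P := by
  have htop := hf.top_eq_of_mem_Ioo hmid
  have hij : i ≠ j := by
    rintro rfl
    exact hj htop
  have hkeep : topOf (Function.update P j Q i) = f P := by rw [Function.update_of_ne hij, htop]
  rw [hf.eq_top_of_mem_Ioo (hkeep ▸ hmid), hkeep]

theorem le_update_of_top_lt (hf : IsFBRWith p q f b i) (hj : topOf (P j) < f P) (Q : D) :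
    f P ≤ f (Function.update P j Q) :=
  hf.le_iff.2 ((hf.le_iff.1 le_rfl).trans (hf.monotone (subset_voterSet_update hj)))

theorem update_le_of_lt_top (hf : IsFBRWith p q f b i) (hj : f P < topOf (P j)) (Q : D) :
    f (Function.update P j Q) ≤ f P := by
  by_contra! hlt
  have hmin : min (f (Function.update P j Q)) (topOf (P j)) ≤ f P :=
    hf.le_iff.2 ((hf.le_iff.1 (min_le_left _ _)).trans
      (hf.monotone (voterSet_update_subset (min_le_right _ _))))
  exact hmin.not_gt (lt_min hlt hj)

theorem strategyProof (hf : IsFBRWith p q f b i) (hpq : p < q) (hD : D ⊆ hybridDomain p q) :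
    StrategyProof fun P => degLottery (f P) := by
  refine strategyProof_degLottery_of_symm_le fun j P Q => ?_
  have hP : IsHybridPref p q (P j).1 := hD (P j).2
  rcases eq_or_ne (f (Function.update P j Q)) (f P) with heq | hne
  · rw [heq]
  rcases eq_or_ne (topOf (P j)) (f P) with htop | htop
  · simp [← htop, topOf]
  have hmid : f P ∉ Set.Ioo p q := fun hmid => hne (hf.update_eq_of_mem_Ioo hmid htop Q)
  rcases htop.lt_or_gt with hlt | hgt
  · exact (hP.prefers_of_top_lt hpq hlt ((hf.le_update_of_top_lt hlt Q).lt_of_ne' hne) hmid).le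
  · exact (hP.prefers_of_lt_top hpq hgt ((hf.update_le_of_lt_top hgt Q).lt_of_ne hne) hmid).le

end IsFBRWith

end FixedBallotRule

/-! ### Mixtures of ballots -/

section Mixture

variable {m n : ℕ} {ι : Type*} [Fintype ι] {w : ι → ℝ}
  {b : ι → Finset (Fin n) → Fin m} {β : Finset (Fin n) → Lottery m}

theorem prob_upSet_eq_sum (hβ : ∀ S a, (β S).1 a = ∑ i, w i * if b i S = a then 1 else 0)
    (S : Finset (Fin n)) (k : Fin m) :
    (β S).prob (upSet k) = ∑ i, w i * if k ≤ b i S then 1 else 0 := by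
  simp only [Lottery.prob, hβ]
  rw [sum_comm]
  simp [upSet]

variable [NeZero m] {D : Set (Pref m)}

theorem tailProb_eq_sum (hb : ∀ i, Monotone (b i))
    (hβ : ∀ S a, (β S).1 a = ∑ i, w i * if b i S = a then 1 else 0) (P : Profile D n) (k : ℕ) :
    tailProb β P k = ∑ i, w i * if k ≤ (fbrOutcome (b i) P : ℕ) then 1 else 0 := by
  unfold tailProb
  split_ifs with hk
  · simp only [prob_upSet_eq_sum hβ, ← le_fbrOutcome_iff (hb _), Fin.le_def]
  · have hgt (i : ι) : ¬ k ≤ (fbrOutcome (b i) P : ℕ) := by omega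
    simp only [hgt, if_false, mul_zero, sum_const_zero]

theorem IsPFBRWith.apply_eq_sum {φ : Profile D n → Lottery m} (hφ : IsPFBRWith φ β)
    (hb : ∀ i, Monotone (b i))
    (hβ : ∀ S a, (β S).1 a = ∑ i, w i * if b i S = a then 1 else 0) (P : Profile D n)
    (a : Fin m) : (φ P).1 a = ∑ i, w i * if fbrOutcome (b i) P = a then 1 else 0 := by
  rw [hφ.2.2, tailProb_eq_sum hb hβ, tailProb_eq_sum hb hβ, ← sum_sub_distrib]
  refine sum_congr rfl fun i _ => ?_
  rw [← mul_sub]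
  congr 1
  simp only [Fin.ext_iff]
  split_ifs <;> first | omega | norm_num

end Mixture

/-! ### Extreme support points of the ballots -/

section Ballots

variable {m n : ℕ} [NeZero m] {p q : Fin m} {β : Finset (Fin n) → Lottery m}
  {S : Finset (Fin n)}

theorem cast_card_pos (hS : S.Nonempty) : (0 : ℝ) < S.card := mod_cast hS.card_pos

theorem sub_cast_card_pos (hS : S ≠ univ) : (0 : ℝ) < n - S.card := by
  have hlt : S.card < n := by simpa using (card_lt_iff_ne_univ S).2 hS
  exact sub_pos.2 (mod_cast hlt)

theorem cast_pos_of_nonempty (hS : S.Nonempty) : (0 : ℝ) < n :=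
  Nat.cast_pos.2 hS.choose.pos

theorem cast_pos_of_ne_univ (hS : S ≠ univ) : (0 : ℝ) < n :=
  (sub_cast_card_pos hS).trans_le (sub_le_self _ (Nat.cast_nonneg _))

theorem cast_card_compl_eq_sub (S : Finset (Fin n)) : (Sᶜ.card : ℝ) = n - S.card := by
  rw [card_compl, Fintype.card_fin, Nat.cast_sub (card_finset_fin_le S)]

theorem card_div_add_sub_card_div (hn : n ≠ 0) (S : Finset (Fin n)) :
    (S.card : ℝ) / n + (n - S.card) / n = 1 := by
  rw [← add_div, add_sub_cancel, div_self (Nat.cast_ne_zero.2 hn)]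

theorem bR_mem_supp_inter (h : ((β S).supp ∩ upSet q).Nonempty) :
    bR β q S ∈ (β S).supp ∩ upSet q := by
  rw [bR, dif_pos h]
  exact min'_mem _ h

theorem bL_mem_supp_inter (h : ((β S).supp ∩ downSet p).Nonempty) :
    bL β p S ∈ (β S).supp ∩ downSet p := by
  rw [bL, dif_pos h]
  exact max'_mem _ h

theorem le_bR (β : Finset (Fin n) → Lottery m) (q : Fin m) (S : Finset (Fin n)) :
    q ≤ bR β q S := by
  by_cases h : ((β S).supp ∩ upSet q).Nonempty
  · simpa [upSet] using (mem_inter.1 (bR_mem_supp_inter h)).2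
  · rw [bR, dif_neg h]
    exact le_lastAlt q

theorem bL_le (β : Finset (Fin n) → Lottery m) (p : Fin m) (S : Finset (Fin n)) :
    bL β p S ≤ p := by
  by_cases h : ((β S).supp ∩ downSet p).Nonempty
  · simpa [downSet] using (mem_inter.1 (bL_mem_supp_inter h)).2
  · rw [bL, dif_neg h]
    exact Fin.zero_le p

theorem bL_lt_bR (β : Finset (Fin n) → Lottery m) (hpq : p < q) (S T : Finset (Fin n)) :
    bL β p S < bR β q T :=
  (bL_le β p S).trans_lt (hpq.trans_le (le_bR β q T))

theorem BallotUnanimity.bR_univ (hβ : BallotUnanimity β) : bR β q univ = lastAlt m := by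
  by_cases h : ((β univ).supp ∩ upSet q).Nonempty
  · simpa [hβ.1, supp_degLottery] using (mem_inter.1 (bR_mem_supp_inter h)).1
  · rw [bR, dif_neg h]

theorem BallotUnanimity.bL_empty (hβ : BallotUnanimity β) : bL β p ∅ = 0 := by
  by_cases h : ((β ∅).supp ∩ downSet p).Nonempty
  · simpa [hβ.2, supp_degLottery] using (mem_inter.1 (bL_mem_supp_inter h)).1
  · rw [bL, dif_neg h]

namespace ConstrainedRDUniform

theorem apply_bR_le (hcrd : ConstrainedRDUniform p q β) (S : Finset (Fin n)) :
    (β S).1 (bR β q S) ≤ S.card / n :=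
  (Lottery.apply_le_prob (by simpa [upSet] using le_bR β q S)).trans_eq (hcrd S).1

theorem apply_bL_le (hcrd : ConstrainedRDUniform p q β) (S : Finset (Fin n)) :
    (β S).1 (bL β p S) ≤ (n - S.card) / n := by
  rw [← cast_card_compl_eq_sub, ← (hcrd S).2]
  exact Lottery.apply_le_prob (by simpa [downSet] using bL_le β p S)

theorem bR_mem_supp (hcrd : ConstrainedRDUniform p q β) (hS : S.Nonempty) :
    bR β q S ∈ (β S).supp := by
  have hpos : 0 < (β S).prob (upSet q) := by
    rw [(hcrd S).1]
    exact div_pos (cast_card_pos hS) (cast_pos_of_nonempty hS)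
  exact (mem_inter.1 (bR_mem_supp_inter (Lottery.supp_inter_nonempty hpos))).1

theorem bL_mem_supp (hcrd : ConstrainedRDUniform p q β) (hS : S ≠ univ) :
    bL β p S ∈ (β S).supp := by
  have hpos : 0 < (β S).prob (downSet p) := by
    rw [(hcrd S).2, cast_card_compl_eq_sub]
    exact div_pos (sub_cast_card_pos hS) (cast_pos_of_ne_univ hS)
  exact (mem_inter.1 (bL_mem_supp_inter (Lottery.supp_inter_nonempty hpos))).1

end ConstrainedRDUniform

theorem forall_apply_eq_gammaFun_iff (hn : n ≠ 0) (hpq : p < q) (S : Finset (Fin n)) :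
    (∀ a, (β S).1 a = gammaFun β p q S a) ↔
      (β S).1 (bR β q S) = S.card / n ∧ (β S).1 (bL β p S) = (n - S.card) / n :=
  Lottery.apply_eq_pair_iff (bL_lt_bR β hpq S S).ne' (card_div_add_sub_card_div hn S)

theorem ConstrainedRDUniform.card_supp_eq_two_iff (hcrd : ConstrainedRDUniform p q β)
    (hpq : p < q) (hS : S.Nonempty) (hS' : S ≠ univ) :
    (β S).supp.card = 2 ↔ ∀ a, (β S).1 a = gammaFun β p q S a := by
  have hne : bR β q S ≠ bL β p S := (bL_lt_bR β hpq S S).ne'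
  have hn : n ≠ 0 := hS.choose.pos.ne'
  have hsub : {bR β q S, bL β p S} ⊆ (β S).supp := by
    simpa [insert_subset_iff] using ⟨hcrd.bR_mem_supp hS, hcrd.bL_mem_supp hS'⟩
  rw [forall_apply_eq_gammaFun_iff hn hpq, ← Lottery.supp_subset_pair_iff hne
    (card_div_add_sub_card_div hn S) (hcrd.apply_bR_le S) (hcrd.apply_bL_le S)]
  constructor
  · intro hcard
    exact (eq_of_subset_of_card_le hsub (by rw [hcard, card_pair hne])).ge
  · intro hsupp
    rw [hsupp.antisymm hsub, card_pair hne]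

/-- The quantity `min(β_S(b̂_S^R)/|S|, β_S(b̂_S^L)/(n-|S|))` whose minimum over the nonempty
coalitions `S ⊂ N` is `α`. -/
def coalitionShare (β : Finset (Fin n) → Lottery m) (p q : Fin m) (S : Finset (Fin n)) : ℝ :=
  min ((β S).1 (bR β q S) / S.card) ((β S).1 (bL β p S) / (n - S.card))

theorem coalitionShare_nonneg (hS : S ≠ univ) : 0 ≤ coalitionShare β p q S :=
  le_min (div_nonneg ((β S).2.1 _) (Nat.cast_nonneg _))
    (div_nonneg ((β S).2.1 _) (sub_cast_card_pos hS).le)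

theorem ConstrainedRDUniform.coalitionShare_le (hcrd : ConstrainedRDUniform p q β)
    (hS : S.Nonempty) : coalitionShare β p q S ≤ 1 / n := by
  refine (min_le_left _ _).trans ?_
  rw [div_le_iff₀ (cast_card_pos hS), one_div_mul_eq_div]
  exact hcrd.apply_bR_le S

theorem ConstrainedRDUniform.coalitionShare_eq_iff (hcrd : ConstrainedRDUniform p q β)
    (hpq : p < q) (hS : S.Nonempty) (hS' : S ≠ univ) :
    coalitionShare β p q S = 1 / n ↔ ∀ a, (β S).1 a = gammaFun β p q S a := by
  rw [forall_apply_eq_gammaFun_iff hS.choose.pos.ne' hpq,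
    ← (hcrd.coalitionShare_le hS).ge_iff_eq, coalitionShare, le_min_iff,
    le_div_iff₀ (cast_card_pos hS), le_div_iff₀ (sub_cast_card_pos hS'),
    one_div_mul_eq_div, one_div_mul_eq_div, (hcrd.apply_bR_le S).ge_iff_eq,
    (hcrd.apply_bL_le S).ge_iff_eq]

theorem ConstrainedRDUniform.alphaVal_eq_iff (hcrd : ConstrainedRDUniform p q β) (hn : 2 ≤ n)
    (hpq : p < q) :
    alphaVal β p q = 1 / n ↔
      ∀ S : Finset (Fin n), S.Nonempty → S ≠ univ → ∀ a, (β S).1 a = gammaFun β p q S a := by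
  let shares : Set ℝ :=
    {x | ∃ S : Finset (Fin n), S.Nonempty ∧ S ≠ univ ∧ x = coalitionShare β p q S}
  have hne : shares.Nonempty := by
    have hproper : ({⟨0, by omega⟩} : Finset (Fin n)) ≠ univ :=
      (card_lt_iff_ne_univ _).1 (by simpa using Nat.lt_of_succ_le hn)
    exact ⟨_, _, singleton_nonempty _, hproper, rfl⟩
  have hbdd : BddBelow shares := ⟨0, fun _ ⟨_, _, hS', hx⟩ => hx ▸ coalitionShare_nonneg hS'⟩
  have hle : ∀ x ∈ shares, x ≤ 1 / n := fun _ ⟨_, hS, _, hx⟩ => hx ▸ hcrd.coalitionShare_le hS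
  calc alphaVal β p q = 1 / n ↔ ∀ x ∈ shares, x = 1 / n := csInf_eq_iff_forall_eq hne hbdd hle
    _ ↔ ∀ S : Finset (Fin n), S.Nonempty → S ≠ univ → coalitionShare β p q S = 1 / n :=
      ⟨fun h S hS hS' => h _ ⟨S, hS, hS', rfl⟩, fun h _ ⟨S, hS, hS', hx⟩ => hx ▸ h S hS hS'⟩
    _ ↔ _ := forall₃_congr fun _ hS hS' => hcrd.coalitionShare_eq_iff hpq hS hS'

end Ballots

/-! ### Decomposition of rules with two-point ballots -/

section Decomposition

variable {m n : ℕ} [NeZero m] {p q : Fin m} {β : Finset (Fin n) → Lottery m}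
  {S T : Finset (Fin n)}

theorem BallotUnanimity.apply_eq_gammaFun (hβ : BallotUnanimity β) (hn : n ≠ 0)
    (hγ : ∀ S : Finset (Fin n), S.Nonempty → S ≠ univ → ∀ a, (β S).1 a = gammaFun β p q S a)
    (S : Finset (Fin n)) (a : Fin m) : (β S).1 a = gammaFun β p q S a := by
  rcases S.eq_empty_or_nonempty with rfl | hS
  · simp [gammaFun, hβ.bL_empty, hβ.2, degLottery, hn]
  by_cases hS' : S = univ
  · subst hS'
    simp [gammaFun, hβ.bR_univ, hβ.1, degLottery, hn]
  · exact hγ S hS hS' a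

theorem prob_upSet_eq_of_gammaFun (hγ : ∀ a, (β S).1 a = gammaFun β p q S a) (k : Fin m) :
    (β S).prob (upSet k) = S.card / n * (if k ≤ bR β q S then 1 else 0)
      + (n - S.card) / n * (if k ≤ bL β p S then 1 else 0) := by
  simp only [Lottery.prob, hγ, gammaFun]
  rw [sum_add_distrib, ← mul_sum, ← mul_sum]
  simp [upSet]

theorem BallotMonotone.bR_le_bR (hβ : BallotMonotone β) (hpq : p < q)
    (hγ : ∀ S a, (β S).1 a = gammaFun β p q S a) (hS : S.Nonempty) (hST : S ⊂ T) :
    bR β q S ≤ bR β q T := by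
  by_contra hlt
  have hmono := hβ S T hST (bR β q S)
  rw [prob_upSet_eq_of_gammaFun (hγ S), prob_upSet_eq_of_gammaFun (hγ T), if_pos le_rfl,
    if_neg (bL_lt_bR β hpq S S).not_ge, if_neg hlt, if_neg (bL_lt_bR β hpq T S).not_ge] at hmono
  linarith [div_pos (cast_card_pos hS) (cast_pos_of_nonempty hS)]

theorem BallotMonotone.bL_le_bL (hβ : BallotMonotone β) (hpq : p < q)
    (hγ : ∀ S a, (β S).1 a = gammaFun β p q S a) (hT : T ≠ univ) (hST : S ⊂ T) :
    bL β p S ≤ bL β p T := by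
  by_contra hlt
  have hmono := hβ S T hST (bL β p S)
  rw [prob_upSet_eq_of_gammaFun (hγ S), prob_upSet_eq_of_gammaFun (hγ T), if_pos le_rfl,
    if_pos (bL_lt_bR β hpq S S).le, if_pos (bL_lt_bR β hpq S T).le, if_neg hlt] at hmono
  have hn : (0 : ℝ) < n := cast_pos_of_ne_univ hT
  have hn0 : n ≠ 0 := (Nat.cast_pos.1 hn).ne'
  linarith [div_pos (sub_cast_card_pos hT) hn, card_div_add_sub_card_div hn0 S,
    card_div_add_sub_card_div hn0 T]

/-- The deterministic ballots obtained by letting voter `i` dictate between the two support points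
of each `β_S`: the ballot of `S` is `b̂_S^R` if `i ∈ S` and `b̂_S^L` otherwise. -/
def dictatorBallot (β : Finset (Fin n) → Lottery m) (p q : Fin m) (i : Fin n)
    (S : Finset (Fin n)) : Fin m :=
  if i ∈ S then bR β q S else bL β p S

theorem gammaFun_eq_sum_dictatorBallot (β : Finset (Fin n) → Lottery m) (p q : Fin m)
    (S : Finset (Fin n)) (a : Fin m) :
    gammaFun β p q S a = ∑ i, 1 / (n : ℝ) * if dictatorBallot β p q i S = a then 1 else 0 := by
  have hmem : ∑ i ∈ S, 1 / (n : ℝ) * (if dictatorBallot β p q i S = a then 1 else 0) =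
      S.card * (1 / n * if a = bR β q S then 1 else 0) := by
    rw [← nsmul_eq_mul, ← sum_const]
    exact sum_congr rfl fun i hi => by simp only [dictatorBallot, hi, if_true, eq_comm]
  have hcompl : ∑ i ∈ Sᶜ, 1 / (n : ℝ) * (if dictatorBallot β p q i S = a then 1 else 0) =
      Sᶜ.card * (1 / n * if a = bL β p S then 1 else 0) := by
    rw [← nsmul_eq_mul, ← sum_const]
    exact sum_congr rfl fun i hi => by
      simp only [dictatorBallot, mem_compl.1 hi, if_false, eq_comm]
  rw [← sum_add_sum_compl S, hmem, hcompl, cast_card_compl_eq_sub, gammaFun]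
  ring

theorem isFBRWith_dictatorBallot {D : Set (Pref m)} (hunan : BallotUnanimity β)
    (hmono : BallotMonotone β) (hpq : p < q) (hγ : ∀ S a, (β S).1 a = gammaFun β p q S a)
    (i : Fin n) :
    IsFBRWith p q (fbrOutcome (D := D) (dictatorBallot β p q i)) (dictatorBallot β p q i) i := by
  refine ⟨?_, ?_, fun S T hST => ?_, fun S => ⟨fun hi => ?_, fun hi => ?_⟩, fun _ => rfl⟩
  · simp [dictatorBallot, hunan.bR_univ]
  · simp [dictatorBallot, hunan.bL_empty]
  · by_cases hiS : i ∈ S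
    · simpa [dictatorBallot, hiS, hST.1 hiS] using hmono.bR_le_bR hpq hγ ⟨i, hiS⟩ hST
    by_cases hiT : i ∈ T
    · simpa [dictatorBallot, hiS, hiT] using (bL_lt_bR β hpq S T).le
    · have hT : T ≠ univ := fun h => hiT (h ▸ mem_univ i)
      simpa [dictatorBallot, hiS, hiT] using hmono.bL_le_bL hpq hγ hT hST
  · simpa [dictatorBallot, hi] using le_bR β q S
  · simpa [dictatorBallot, hi] using bL_le β p S

theorem IsPFBRWith.decomposable {D : Set (Pref m)} {φ : Profile D n → Lottery m}
    (hφ : IsPFBRWith φ β) (hn : n ≠ 0) (hpq : p < q) (hD : D ⊆ hybridDomain p q)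
    (hγ : ∀ S a, (β S).1 a = gammaFun β p q S a) : Decomposable φ := by
  have hfbr := isFBRWith_dictatorBallot (D := D) hφ.1 hφ.2.1 hpq hγ
  refine ⟨n, fun i => fbrOutcome (dictatorBallot β p q i), fun _ => 1 / n, fun _ => ?_, ?_,
    fun i => ⟨(hfbr i).unanimous, (hfbr i).strategyProof hpq hD⟩, fun P a => ?_⟩
  · exact one_div_pos.2 (Nat.cast_pos.2 hn.bot_lt)
  · simp [hn]
  · exact hφ.apply_eq_sum (fun i => (hfbr i).monotone)
      (fun S a => (hγ S a).trans (gammaFun_eq_sum_dictatorBallot β p q S a)) P a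

end Decomposition

end PFBRPaper

theorem alpha_eq_one_over_n_general {m n : ℕ} [NeZero m] (hn : 2 ≤ n) {p q : Fin m} (hpq : p < q)
    {D : Set (Pref m)} (hD : D ⊆ hybridDomain p q) {φ : Profile D n → Lottery m}
    {β : Finset (Fin n) → Lottery m} (hβ : IsPFBRWith φ β) (hcrd : ConstrainedRDUniform p q β) :
    (alphaVal β p q = 1 / (n : ℝ) ↔
      ∀ S : Finset (Fin n), S.Nonempty → S ≠ Finset.univ → (β S).supp.card = 2) ∧
    (alphaVal β p q = 1 / (n : ℝ) →
      (∀ S : Finset (Fin n), S.Nonempty → S ≠ Finset.univ →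
        ∀ a : Fin m, (β S).1 a = gammaFun β p q S a) ∧
      Decomposable φ) := by
  have hn0 : n ≠ 0 := by omega
  rw [hcrd.alphaVal_eq_iff hn hpq]
  refine ⟨forall₃_congr fun S hS hS' => (hcrd.card_supp_eq_two_iff hpq hS hS').symm,
    fun hγ => ⟨hγ, ?_⟩⟩
  exact hβ.decomposable hn0 hpq hD (hβ.1.apply_eq_gammaFun hn0 hγ)

/-- `α = 1/n` iff every ballot of a nonempty proper coalition has binary
support; and in that case the ballots are the two-point lotteries
`(|S|/n) e_{b̂_S^R} + ((n-|S|)/n) e_{b̂_S^L}` and the PFBR is decomposable. -/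
theorem alpha_eq_one_over_n (m n : ℕ) [NeZero m] (hm : 3 ≤ m) (hn : 2 ≤ n)
    (p q : Fin m) (hgap1 : (p : ℕ) + 1 < (q : ℕ)) (hgap2 : (q : ℕ) - (p : ℕ) < m - 1)
    (φ : Profile (hybridDomain p q) n → Lottery m)
    (β : Finset (Fin n) → Lottery m) (hβ : IsPFBRWith φ β)
    (hanon : BallotAnonymous β) (hcrd : ConstrainedRDUniform p q β)
    (hpcm : PerCapitaMonotone p q β) :
    (alphaVal β p q = 1 / (n : ℝ) ↔
      ∀ S : Finset (Fin n), S.Nonempty → S ≠ Finset.univ → (β S).supp.card = 2) ∧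
    (alphaVal β p q = 1 / (n : ℝ) →
      (∀ S : Finset (Fin n), S.Nonempty → S ≠ Finset.univ →
        ∀ a : Fin m, (β S).1 a = gammaFun β p q S a) ∧
      Decomposable φ) := by
  have hpq : p < q := Fin.lt_def.2 (by omega)
  exact alpha_eq_one_over_n_general hn hpq Set.Subset.rfl hβ hcrd
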